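/- Let U be a unitary N×N complex matrix, let π be a unit vector with Uπ = π such that the eigenspace of U for eigenvalue 1 is spanned by π, and suppose every eigenvalue of U other than 1 has the form e^{iφ} with λ ≤ |φ| ≤ π, where λ ∈ (0, π). Let δ ∈ (0, 1) and let L be an odd positive integer with L ≥ ln(4/δ)/(λ/2). Define R = (R_z(−π)⊗I_N) · C(U,λ,L)† · (R_z(π)⊗I_N) · C(U,λ,L) acting on ℂ² ⊗ ℂ^N. Then: (i) R(e_0 ⊗ π) = e_0 ⊗ π; and (ii) for every vector ψ ∈ ℂ^N with ⟨ψ, π⟩ = 0 and ‖ψ‖ = 1, one has ‖(R + I)(e_0 ⊗ ψ)‖ ≤ δ. That is, R approximates I ⊗ (2|π⟩⟨π| − I) with one-sided error δ. -/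

import Mathlib

/-!
On `ℂ² ⊗ v`, with `v` an eigenvector of `U` for the eigenvalue `μ = e^{iφ}`, the circuit acts as the
`2 × 2` unitary `W = R_x(-π/2) M R_x(π/2)`, where `M = ∏ diag(1, μ) R_y(θ_n)` (`actsOn_qpdCircuit`).
So `R` acts there as `Z W† Z W` with `Z = diag(1, -1)`, the phases of `R_z(±π)` cancelling, and
`‖(R + 1)(e₀ ⊗ v)‖ = 2 |W₀₀|` by unitarity (`reflQubit_norm`). Expanding `ψ` in an orthonormal
eigenbasis of `U` and using Parseval's identity, everything reduces to computing `W₀₀`.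

The angles satisfy `θ₀ = 0` and `θ_{L-n} = -θ_n`. Hence `M` is a symmetric matrix, which gives
`W₀₀ = tr M / 2` (`qpdCore_transpose`, `Rx_conj_apply`), and `M = 1` when `μ = 1` (`qpdCore_one`),
which gives the exact invariance of `e₀ ⊗ p`.

For the trace, put `r = e^{2πi/L}`. Up to a scalar depending only on `n`, the factor
`diag(1, μ) R_y(θ_n)` equals `rⁿ A + B` for fixed matrices `A` and `B` (`exists_Ry_eq`). The trace
of `∏ (t rⁿ A + B)` is a polynomial in `t` of degree at most `L`, and, the trace being cyclic, it is
invariant under `t ↦ r t`; so only the powers `t⁰` and `tᴸ` occur and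
`tr ∏ (rⁿ A + B) = tr Aᴸ + tr Bᴸ` (`trace_seqProd`). By Cayley-Hamilton each of these two traces is
`2 (e^{iφ/2} cos (λ/2))ᴸ T_L(cos (φ/2) / cos (λ/2))` (`trace_pow_eq_chebyshev`). Normalising by the
value at `φ = 0`, where `M = 1`,
`|W₀₀| = |T_L(cos (φ/2) / cos (λ/2))| / T_L(1 / cos (λ/2))`.

For `λ ≤ |φ| ≤ π` the numerator is at most `1`. The denominator is at least `2 / δ`: it is
`cosh (L y)` with `cosh y = 1 / cos (λ/2)`, and `y ≥ λ/2` because `cos x cosh x ≤ 1` on `[0, π/2)`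
(`two_div_le_chebyshev`). Thus `2 |W₀₀| ≤ δ`.
-/


open Real Matrix

/-- The single-qubit rotation `R_x(θ)`. -/
noncomputable def Rx (θ : ℝ) : Matrix (Fin 2) (Fin 2) ℂ :=
  !![(Real.cos (θ / 2) : ℂ), -Complex.I * Real.sin (θ / 2);
     -Complex.I * Real.sin (θ / 2), (Real.cos (θ / 2) : ℂ)]

/-- The single-qubit rotation `R_y(θ)`. -/
noncomputable def Ry (θ : ℝ) : Matrix (Fin 2) (Fin 2) ℂ :=
  !![(Real.cos (θ / 2) : ℂ), -(Real.sin (θ / 2) : ℂ);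
     (Real.sin (θ / 2) : ℂ), (Real.cos (θ / 2) : ℂ)]

/-- The single-qubit rotation `R_z(θ) = diag(e^{−iθ/2}, e^{iθ/2})`. -/
noncomputable def Rz (θ : ℝ) : Matrix (Fin 2) (Fin 2) ℂ :=
  !![Complex.exp (-(θ / 2 : ℝ) * Complex.I), 0;
     0, Complex.exp ((θ / 2 : ℝ) * Complex.I)]

/-- The tensor product `A ⊗ I_N` of a 2×2 matrix with the N×N identity,
realised as a 2×2 block matrix (the first summand is the `|0⟩` block). -/
noncomputable def tensorId {N : ℕ} (A : Matrix (Fin 2) (Fin 2) ℂ) :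
    Matrix (Fin N ⊕ Fin N) (Fin N ⊕ Fin N) ℂ :=
  Matrix.fromBlocks (A 0 0 • 1) (A 0 1 • 1) (A 1 0 • 1) (A 1 1 • 1)

/-- The controlled-`U` operation `Λ(U) = diag(I_N, U)`. -/
noncomputable def ctrl {N : ℕ} (U : Matrix (Fin N) (Fin N) ℂ) :
    Matrix (Fin N ⊕ Fin N) (Fin N ⊕ Fin N) ℂ :=
  Matrix.fromBlocks 1 0 0 U

/-- The QPD rotation angles `θ_n = 2·arctan(sin(λ/2)·tan(nπ/L))`. -/
noncomputable def qpdTheta (lam : ℝ) (L n : ℕ) : ℝ :=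
  2 * Real.arctan (Real.sin (lam / 2) * Real.tan (n * π / L))

/-- The quantum phase discrimination circuit
`C(U,λ,L) = (R_x(−π/2)⊗I)·[∏_{n=0}^{L−1} Λ(U)·(R_y(θ_n)⊗I)]·(R_x(π/2)⊗I)`,
with the `n = 0` factor applied first (rightmost). -/
noncomputable def qpdCircuit {N : ℕ} (U : Matrix (Fin N) (Fin N) ℂ) (lam : ℝ) (L : ℕ) :
    Matrix (Fin N ⊕ Fin N) (Fin N ⊕ Fin N) ℂ :=
  tensorId (Rx (-(π / 2))) *
    (((List.range L).map fun n => ctrl U * tensorId (Ry (qpdTheta lam L n))).reverse).prod *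
    tensorId (Rx (π / 2))

/-! ### Ordered products and the trace of a product over roots of unity -/

/-- The ordered product `f (n - 1) * ⋯ * f 1 * f 0`, with the factor of index `0` rightmost. -/
def seqProd {S : Type*} [Monoid S] (f : ℕ → S) : ℕ → S
  | 0 => 1
  | n + 1 => f n * seqProd f n

theorem list_prod_eq_seqProd {S : Type*} [Monoid S] (f : ℕ → S) (n : ℕ) :
    (((List.range n).map f).reverse).prod = seqProd f n := by
  induction n with
  | zero => simp [seqProd]
  | succ n ih => simp [List.range_succ, seqProd, ih]

theorem seqProd_congr {S : Type*} [Monoid S] {f g : ℕ → S} {n : ℕ} (h : ∀ k < n, f k = g k) :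
    seqProd f n = seqProd g n := by
  induction n with
  | zero => rfl
  | succ n ih => rw [seqProd, seqProd, h n (by omega), ih fun k hk => h k (by omega)]

theorem seqProd_succ' {S : Type*} [Monoid S] (f : ℕ → S) (n : ℕ) :
    seqProd f (n + 1) = seqProd (fun k => f (k + 1)) n * f 0 := by
  induction n with
  | zero => simp [seqProd]
  | succ n ih => rw [seqProd, ih, seqProd, mul_assoc]

/-- The rebracketing `d * (x₁ d) ⋯ (xₙ d) = (d x₁) ⋯ (d xₙ) * d`. -/
theorem mul_seqProd {S : Type*} [Monoid S] (d : S) (f : ℕ → S) (n : ℕ) :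
    d * seqProd (fun k => f k * d) n = seqProd (fun k => d * f k) n * d := by
  induction n with
  | zero => simp [seqProd]
  | succ n ih => simp only [seqProd, mul_assoc, ih]

theorem transpose_seqProd (f : ℕ → Matrix (Fin 2) (Fin 2) ℂ) (n : ℕ) :
    (seqProd f n)ᵀ = seqProd (fun k => (f (n - 1 - k))ᵀ) n := by
  induction n generalizing f with
  | zero => simp [seqProd]
  | succ n ih =>
    rw [seqProd_succ', Matrix.transpose_mul, ih, seqProd]
    congr 1
    · simp
    · refine seqProd_congr fun k hk => ?_
      congr 2
      omega

theorem seqProd_smul (h : ℕ → ℂ) (f : ℕ → Matrix (Fin 2) (Fin 2) ℂ) (n : ℕ) :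
    seqProd (fun k => h k • f k) n = (∏ k ∈ Finset.range n, h k) • seqProd f n := by
  induction n with
  | zero => simp [seqProd]
  | succ n ih =>
    rw [seqProd, ih, seqProd, Finset.prod_range_succ, smul_mul_smul_comm, mul_comm]

/-- The product of the factors `t rᵏ A + B` is a polynomial in `t` of degree at most `n`; only its
extreme coefficients are made explicit. -/
theorem seqProd_eq_sum {S : Type*} [Ring S] [Algebra ℂ S] (A B : S) (r : ℂ) (n : ℕ) :
    ∃ c : ℕ → S, c 0 = B ^ n ∧ c n = r ^ (∑ k ∈ Finset.range n, k) • A ^ n ∧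
      ∀ t : ℂ, seqProd (fun k => (t * r ^ k) • A + B) n = ∑ k ∈ Finset.range (n + 1), t ^ k • c k := by
  induction n with
  | zero => exact ⟨fun _ => 1, by simp, by simp, by simp [seqProd]⟩
  | succ n ih =>
    obtain ⟨c, h0, hn, hc⟩ := ih
    refine ⟨fun k => (if k = 0 then 0 else r ^ n • (A * c (k - 1))) +
      (if k = n + 1 then 0 else B * c k), ?_, ?_, fun t => ?_⟩
    · simp [h0, pow_succ']
    · simp [hn, Finset.sum_range_succ, pow_succ', pow_add, smul_smul, mul_comm]
    · rw [seqProd, hc, add_mul, Finset.sum_congr rfl fun k _ => smul_add _ _ _,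
        Finset.sum_add_distrib]
      congr 1
      · rw [Finset.sum_range_succ' _ (n + 1), Finset.mul_sum]
        simp only [if_true, smul_zero, add_zero, Nat.add_eq_zero_iff, one_ne_zero, and_false,
          if_false, Nat.add_sub_cancel, smul_mul_smul_comm, smul_smul]
        refine Finset.sum_congr rfl fun k _ => ?_
        ring_nf
      · rw [Finset.sum_range_succ _ (n + 1), Finset.mul_sum]
        simp only [if_true, smul_zero, add_zero]
        refine Finset.sum_congr rfl fun k hk => ?_
        rw [if_neg (by have := Finset.mem_range.1 hk; omega), mul_smul_comm]

/-- For `r` a primitive root of unity of odd order `L`, the trace of the product of the factors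
`rᵏ A + B` has no mixed terms. Replacing `A` by `t A` makes the trace a polynomial in `t` of degree
at most `L`. By cyclicity of the trace it takes the same value at all `t = rʲ`, so averaging over
`j` kills every power of `t` other than `t⁰` and `tᴸ`. Oddness of `L` makes `r ^ (0 + ⋯ + (L - 1))`
equal to `1`. -/
theorem trace_seqProd (A B : Matrix (Fin 2) (Fin 2) ℂ) {r : ℂ} {L : ℕ} (hL : Odd L)
    (hr : IsPrimitiveRoot r L) :
    (seqProd (fun k => r ^ k • A + B) L).trace = (A ^ L).trace + (B ^ L).trace := by
  have hLpos : 0 < L := hL.pos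
  obtain ⟨c, h0, hn, hc⟩ := seqProd_eq_sum A B r L
  -- cyclicity: moving the rightmost factor to the left multiplies `t` by `r`
  have hcyc : ∀ j : ℕ, (seqProd (fun k => (r ^ j * r ^ k) • A + B) L).trace =
      (seqProd (fun k => r ^ k • A + B) L).trace := by
    intro j
    induction j with
    | zero => simp
    | succ j ih =>
      rw [← ih]
      obtain ⟨m, rfl⟩ : ∃ m, L = m + 1 := ⟨L - 1, by omega⟩
      rw [seqProd_succ' (fun k => (r ^ j * r ^ k) • A + B), Matrix.trace_mul_comm, seqProd]
      congr 2
      · have : r ^ (j + 1) * r ^ m = r ^ j := by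
          rw [← pow_add, show j + 1 + m = j + (m + 1) by ring, pow_add, hr.pow_eq_one, mul_one]
        simp [this]
      · refine seqProd_congr fun k _ => ?_
        ring_nf
  have hsum : (L : ℂ) * (seqProd (fun k => r ^ k • A + B) L).trace =
      ∑ k ∈ Finset.range (L + 1), (∑ j ∈ Finset.range L, (r ^ k) ^ j) * (c k).trace := by
    have : ∑ j ∈ Finset.range L, (seqProd (fun k => (r ^ j * r ^ k) • A + B) L).trace =
        (L : ℂ) * (seqProd (fun k => r ^ k • A + B) L).trace := by
      simp [hcyc]
    rw [← this]
    simp_rw [hc, Matrix.trace_sum, Matrix.trace_smul, smul_eq_mul, Finset.sum_mul]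
    rw [Finset.sum_comm]
    refine Finset.sum_congr rfl fun k _ => Finset.sum_congr rfl fun j _ => ?_
    rw [← pow_mul, ← pow_mul, mul_comm j k]
  have hmid : ∀ k ∈ Finset.range (L + 1), k ≠ 0 → k ≠ L →
      (∑ j ∈ Finset.range L, (r ^ k) ^ j) * (c k).trace = 0 := by
    intro k hk hk0 hkL
    have hk' := Finset.mem_range.1 hk
    rw [geom_sum_eq (hr.pow_ne_one_of_pos_of_lt hk0 (by omega)), ← pow_mul, mul_comm k L, pow_mul,
      hr.pow_eq_one]
    simp
  rw [Finset.sum_range_succ, Finset.sum_eq_single 0] at hsum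
  · have htop : r ^ (∑ k ∈ Finset.range L, k) = 1 := by
      obtain ⟨m, rfl⟩ := hL
      rw [Finset.sum_range_id, show (2 * m + 1) * (2 * m + 1 - 1) / 2 = (2 * m + 1) * m by
        rw [Nat.add_sub_cancel, show (2 * m + 1) * (2 * m) = ((2 * m + 1) * m) * 2 by ring]
        simp, pow_mul, hr.pow_eq_one, one_pow]
    rw [htop, one_smul] at hn
    rw [h0, hn, hr.pow_eq_one] at hsum
    have hLne : (L : ℂ) ≠ 0 := by exact_mod_cast hLpos.ne'
    apply mul_left_cancel₀ hLne
    rw [hsum]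
    simp
    ring
  · intro k hk hk0
    exact hmid k (Finset.mem_range.2 (by have := Finset.mem_range.1 hk; omega)) hk0
      (Finset.mem_range.1 hk).ne
  · intro h
    exact absurd (Finset.mem_range.2 hLpos) h

/-! ### A lower bound for Chebyshev polynomials outside `[-1, 1]` -/

/-- The derivative of `cos * cosh` is `-(sin * cosh - cos * sinh)`, and the function in parentheses
vanishes at `0` and has derivative `2 * sin * sinh ≥ 0`. -/
theorem cos_mul_cosh_le_one {x : ℝ} (h0 : 0 ≤ x) (h1 : x < π / 2) :
    Real.cos x * Real.cosh x ≤ 1 := by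
  have hg : AntitoneOn (fun x : ℝ => Real.cos x * Real.cosh x) (Set.Icc 0 (π / 2)) := by
    refine antitoneOn_of_deriv_nonpos (convex_Icc _ _) (by fun_prop) (by fun_prop) ?_
    intro y hy
    rw [interior_Icc] at hy
    have hd : deriv (fun x : ℝ => Real.cos x * Real.cosh x) y =
        -Real.sin y * Real.cosh y + Real.cos y * Real.sinh y :=
      ((Real.hasDerivAt_cos y).mul (Real.hasDerivAt_cosh y)).deriv
    rw [hd]
    have hk : MonotoneOn (fun x : ℝ => Real.sin x * Real.cosh x - Real.cos x * Real.sinh x)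
        (Set.Icc 0 (π / 2)) := by
      refine monotoneOn_of_deriv_nonneg (convex_Icc _ _) (by fun_prop) (by fun_prop) ?_
      intro z hz
      rw [interior_Icc] at hz
      have hd' : deriv (fun x : ℝ => Real.sin x * Real.cosh x - Real.cos x * Real.sinh x) z =
          (Real.cos z * Real.cosh z + Real.sin z * Real.sinh z) -
            (-Real.sin z * Real.sinh z + Real.cos z * Real.cosh z) :=
        (((Real.hasDerivAt_sin z).mul (Real.hasDerivAt_cosh z)).sub
          ((Real.hasDerivAt_cos z).mul (Real.hasDerivAt_sinh z))).deriv
      rw [hd']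
      have h1 : 0 ≤ Real.sin z := Real.sin_nonneg_of_nonneg_of_le_pi hz.1.le (by linarith [hz.2, Real.pi_pos])
      have h2 : 0 ≤ Real.sinh z := Real.sinh_nonneg_iff.2 hz.1.le
      nlinarith [mul_nonneg h1 h2]
    have := hk (Set.left_mem_Icc.2 (by positivity)) (Set.Ioo_subset_Icc_self hy) hy.1.le
    simp at this
    linarith
  simpa using hg (Set.left_mem_Icc.2 (by positivity)) ⟨h0, h1.le⟩ h0

/-- With `1 / cos (λ/2) = cosh y`, the value of `T_L` is `cosh (L y)`, and `y ≥ λ/2` because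
`cos x * cosh x ≤ 1`; hence `cosh (L y) ≥ exp (L λ/2) / 2 ≥ 2 / δ`. -/
theorem two_div_le_chebyshev {lam δ : ℝ} (hlam : lam ∈ Set.Ioo 0 π) (hδ : δ ∈ Set.Ioo (0 : ℝ) 1)
    {L : ℕ} (hL : (L : ℝ) ≥ Real.log (4 / δ) / (lam / 2)) :
    2 / δ ≤ (Polynomial.Chebyshev.T ℝ L).eval (1 / Real.cos (lam / 2)) := by
  obtain ⟨hl0, hl1⟩ := hlam
  have hc : 0 < Real.cos (lam / 2) := Real.cos_pos_of_mem_Ioo ⟨by linarith, by linarith⟩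
  have hone : 1 ≤ 1 / Real.cos (lam / 2) := by
    rw [le_div_iff₀ hc]; linarith [Real.cos_le_one (lam / 2)]
  obtain hy := Real.cosh_arcosh hone
  set y := Real.arcosh (1 / Real.cos (lam / 2)) with hydef
  have hy0 : 0 ≤ y := Real.arcosh_nonneg hone
  have hle : lam / 2 ≤ y := by
    have h1 : Real.cosh (lam / 2) ≤ Real.cosh y := by
      rw [hy, le_div_iff₀ hc, mul_comm]
      exact cos_mul_cosh_le_one (by linarith) (by linarith)
    rwa [Real.cosh_le_cosh, abs_of_nonneg (by linarith), abs_of_nonneg hy0] at h1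
  rw [← hy, Polynomial.Chebyshev.T_real_cosh]
  have h2 : Real.log (4 / δ) ≤ L * y := by
    rw [ge_iff_le, div_le_iff₀ (by linarith)] at hL
    exact hL.trans (mul_le_mul_of_nonneg_left hle (Nat.cast_nonneg L))
  have h3 : 4 / δ ≤ Real.exp (L * y) := by
    rw [← Real.log_le_iff_le_exp (div_pos (by norm_num) hδ.1)]
    exact h2
  rw [Real.cosh_eq]
  have h4 := Real.exp_pos (-(L * y))
  have h5 : 2 / δ = (4 / δ) / 2 := by ring
  push_cast
  linarith

/-! ### Eigenbases of unitary maps -/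

/-- The spectral theorem for a linear isometry of a finite-dimensional complex inner product space
to itself. -/
theorem exists_eigenbasis {E : Type*} [NormedAddCommGroup E] [InnerProductSpace ℂ E]
    [FiniteDimensional ℂ E] (T : E →ₗ[ℂ] E) (hT : ∀ x y, inner ℂ (T x) (T y) = inner ℂ x y) :
    ∃ (b : OrthonormalBasis (Fin (Module.finrank ℂ E)) ℂ E) (μ : Fin (Module.finrank ℂ E) → ℂ),
      ∀ j, T (b j) = μ j • b j := by
  classical
  have hnorm : ∀ (μ : ℂ) (v : E), v ≠ 0 → T v = μ • v → (starRingEnd ℂ) μ * μ = 1 := by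
    intro μ v hv h
    have h1 := hT v v
    rw [h, inner_smul_left, inner_smul_right, ← mul_assoc] at h1
    exact mul_right_cancel₀ (inner_self_ne_zero.2 hv) (h1.trans (one_mul _).symm)
  have horth : OrthogonalFamily ℂ (fun μ : Module.End.Eigenvalues T => Module.End.eigenspace T μ)
      fun μ => (Module.End.eigenspace T μ).subtypeₗᵢ := by
    rintro ⟨μ, hμ⟩ ⟨ν, hν⟩ hne ⟨v, hv⟩ ⟨w, hw⟩
    change inner ℂ v w = 0
    have hv : T v = μ • v := Module.End.mem_eigenspace_iff.1 hv
    have hw : T w = ν • w := Module.End.mem_eigenspace_iff.1 hw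
    by_contra hvw
    have hv0 : v ≠ 0 := fun h => hvw (by simp [h])
    have h1 := hT v w
    rw [hv, hw, inner_smul_left, inner_smul_right, ← mul_assoc] at h1
    have h2 : (starRingEnd ℂ) μ * ν = 1 := mul_right_cancel₀ hvw (h1.trans (one_mul _).symm)
    have h3 := hnorm μ v hv0 hv
    have h4 : (starRingEnd ℂ) μ ≠ 0 := left_ne_zero_of_mul_eq_one h3
    exact hne (Subtype.ext (mul_left_cancel₀ h4 (h3.trans h2.symm)))
  have hbot : (⨆ μ : Module.End.Eigenvalues T, Module.End.eigenspace T μ)ᗮ = ⊥ := by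
    set S := (⨆ μ : Module.End.Eigenvalues T, Module.End.eigenspace T (μ : ℂ))ᗮ with hS
    have hinv : ∀ x ∈ S, T x ∈ S := by
      intro x hx
      rw [hS, ← Submodule.iInf_orthogonal, Submodule.mem_iInf] at hx ⊢
      intro μ v hv
      have hv' := Module.End.mem_eigenspace_iff.1 hv
      by_cases hv0 : v = 0
      · simp [hv0]
      have h1 := hT v x
      rw [hv', inner_smul_left, hx μ v hv] at h1
      exact (mul_eq_zero.1 h1).resolve_left (left_ne_zero_of_mul_eq_one (hnorm _ v hv0 hv'))
    -- otherwise the orthogonal complement, being invariant, would contain a further eigenvector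
    by_contra hne
    have : Nontrivial S := Submodule.nontrivial_iff_ne_bot.2 hne
    obtain ⟨μ, hμ⟩ := Module.End.exists_eigenvalue (T.restrict hinv)
    obtain ⟨⟨v, hvS⟩, hv⟩ := hμ.exists_hasEigenvector
    have hv1 : T v = μ • v := congrArg Subtype.val hv.apply_eq_smul
    have hv0 : v ≠ 0 := fun h => hv.2 (Subtype.ext h)
    have hev : Module.End.HasEigenvalue T μ :=
      Module.End.hasEigenvalue_of_hasEigenvector ⟨Module.End.mem_eigenspace_iff.2 hv1, hv0⟩
    have hmem : v ∈ ⨆ μ : Module.End.Eigenvalues T, Module.End.eigenspace T (μ : ℂ) :=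
      Submodule.mem_iSup_of_mem (⟨μ, hev⟩ : Module.End.Eigenvalues T)
        (Module.End.mem_eigenspace_iff.2 hv1)
    exact hv0 (inner_self_eq_zero.1 (hvS v hmem))
  have hint : DirectSum.IsInternal fun μ : Module.End.Eigenvalues T =>
      Module.End.eigenspace T (μ : ℂ) := horth.isInternal_iff.2 hbot
  refine ⟨hint.subordinateOrthonormalBasis rfl horth,
    fun j => (hint.subordinateOrthonormalBasisIndex rfl j horth : Module.End.Eigenvalues T),
    fun j => ?_⟩
  exact Module.End.mem_eigenspace_iff.1 (hint.subordinateOrthonormalBasis_subordinate rfl j horth)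

/-! ### The circuit on an eigenvector -/

/-- The phase gate `diag(1, μ)`: the action of `Λ(U)` on the qubit when the second register holds an
eigenvector of `U` with eigenvalue `μ`. -/
def phaseMat (μ : ℂ) : Matrix (Fin 2) (Fin 2) ℂ := !![1, 0; 0, μ]

/-- The ordered product inside the circuit, without the outer `R_x` rotations, restricted to an eigenvector
of `U` with eigenvalue `μ`. -/
noncomputable def qpdCore (μ : ℂ) (lam : ℝ) (L : ℕ) : Matrix (Fin 2) (Fin 2) ℂ :=
  seqProd (fun n => phaseMat μ * Ry (qpdTheta lam L n)) L

/-- The circuit `C(U, λ, L)` restricted to an eigenvector of `U` with eigenvalue `μ`. -/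
noncomputable def qpdQubit (μ : ℂ) (lam : ℝ) (L : ℕ) : Matrix (Fin 2) (Fin 2) ℂ :=
  Rx (-(π / 2)) * qpdCore μ lam L * Rx (π / 2)

theorem Ry_mul (a b : ℝ) : Ry a * Ry b = Ry (a + b) := by
  ext i j
  fin_cases i <;> fin_cases j <;>
    simp [Ry, Matrix.mul_apply, Fin.sum_univ_two, add_div, Complex.cos_add, Complex.sin_add] <;>
    ring

theorem Ry_zero : Ry 0 = 1 := by
  ext i j
  fin_cases i <;> fin_cases j <;> simp [Ry]

theorem Ry_neg (a : ℝ) : Ry (-a) = (Ry a)ᵀ := by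
  ext i j
  fin_cases i <;> fin_cases j <;> simp [Ry, neg_div]

theorem phaseMat_transpose (μ : ℂ) : (phaseMat μ)ᵀ = phaseMat μ := by
  ext i j
  fin_cases i <;> fin_cases j <;> simp [phaseMat]

theorem phaseMat_one : phaseMat 1 = 1 := by
  ext i j
  fin_cases i <;> fin_cases j <;> simp [phaseMat]

theorem qpdTheta_zero (lam : ℝ) (L : ℕ) : qpdTheta lam L 0 = 0 := by
  simp [qpdTheta]

theorem qpdTheta_sub (lam : ℝ) {L n : ℕ} (hL : 0 < L) (hn : n ≤ L) :
    qpdTheta lam L (L - n) = -qpdTheta lam L n := by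
  have hL' : (L : ℝ) ≠ 0 := by positivity
  have : ((L - n : ℕ) : ℝ) * π / L = π - n * π / L := by
    rw [Nat.cast_sub hn]
    field_simp
  rw [qpdTheta, this, Real.tan_pi_sub, mul_neg, Real.arctan_neg, qpdTheta]
  ring

/-- For `μ = 1` the circuit is a rotation by the sum of the angles, which cancel in pairs. -/
theorem qpdCore_one (lam : ℝ) (L : ℕ) (hL : 0 < L) : qpdCore 1 lam L = 1 := by
  have h : ∀ n, seqProd (fun k => phaseMat 1 * Ry (qpdTheta lam L k)) n =
      Ry (∑ k ∈ Finset.range n, qpdTheta lam L k) := by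
    intro n
    induction n with
    | zero => simp [seqProd, Ry_zero]
    | succ n ih =>
      rw [seqProd, ih, phaseMat_one, one_mul, Ry_mul, Finset.sum_range_succ, add_comm]
  have hsum : ∑ k ∈ Finset.range L, qpdTheta lam L k = 0 := by
    obtain ⟨m, rfl⟩ : ∃ m, L = m + 1 := ⟨L - 1, by omega⟩
    rw [Finset.sum_range_succ', qpdTheta_zero, add_zero]
    have h1 := Finset.sum_range_reflect (fun k => qpdTheta lam (m + 1) (k + 1)) m
    have h2 : ∑ j ∈ Finset.range m, qpdTheta lam (m + 1) (m - 1 - j + 1) =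
        -∑ j ∈ Finset.range m, qpdTheta lam (m + 1) (j + 1) := by
      rw [← Finset.sum_neg_distrib]
      refine Finset.sum_congr rfl fun j hj => ?_
      have := Finset.mem_range.1 hj
      rw [← qpdTheta_sub lam hL (by omega)]
      congr 1
      omega
    linarith
  rw [qpdCore, h, hsum, Ry_zero]

/-- Since `θ₀ = 0` and `θ_{L-n} = -θ_n`, the word `P R_y(θ_{L-1}) P ⋯ P R_y(θ₁) P`, with
`P = diag(1, μ)`, is symmetric under transposition. -/
theorem qpdCore_transpose (μ : ℂ) (lam : ℝ) (L : ℕ) (hL : 0 < L) :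
    (qpdCore μ lam L)ᵀ = qpdCore μ lam L := by
  obtain ⟨m, rfl⟩ : ∃ m, L = m + 1 := ⟨L - 1, by omega⟩
  have h : qpdCore μ lam (m + 1) =
      seqProd (fun k => phaseMat μ * Ry (qpdTheta lam (m + 1) (k + 1))) m * phaseMat μ := by
    rw [qpdCore, seqProd_succ', qpdTheta_zero, Ry_zero, mul_one]
  rw [h, Matrix.transpose_mul, transpose_seqProd, phaseMat_transpose, ← mul_seqProd]
  congr 1
  refine seqProd_congr fun k hk => ?_
  rw [Matrix.transpose_mul, phaseMat_transpose, ← Ry_neg, ← qpdTheta_sub lam hL (by omega)]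
  congr 3
  omega

/-- By Cayley-Hamilton, the traces of the powers of a `2 × 2` matrix obey the Chebyshev recurrence
up to scaling. -/
theorem trace_pow_eq_chebyshev (M : Matrix (Fin 2) (Fin 2) ℂ) (a : ℂ) (x : ℝ)
    (htr : M.trace = 2 * a * x) (hdet : M.det = a ^ 2) (n : ℕ) :
    (M ^ n).trace = 2 * a ^ n * ((Polynomial.Chebyshev.T ℝ n).eval x : ℝ) := by
  have hCH : M * M = (2 * a * x) • M - (a ^ 2) • (1 : Matrix (Fin 2) (Fin 2) ℂ) := by
    rw [← htr, ← hdet, Matrix.trace_fin_two, Matrix.det_fin_two]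
    ext i j
    fin_cases i <;> fin_cases j <;> simp [Matrix.mul_apply, Fin.sum_univ_two] <;> ring
  induction n using Nat.twoStepInduction with
  | zero => simp
  | one => simp [htr]
  | more n ih0 ih1 =>
    have h1 : M ^ (n + 2) = (2 * a * x) • M ^ (n + 1) - (a ^ 2) • M ^ n := by
      rw [pow_add, pow_two, hCH, mul_sub, mul_smul_comm, mul_smul_comm, mul_one, ← pow_succ]
    rw [h1, Matrix.trace_sub, Matrix.trace_smul, Matrix.trace_smul, ih0, ih1]
    push_cast
    rw [Polynomial.Chebyshev.T_add_two]
    simp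
    ring

/-- Since `tan (θ_n / 2) = sin (λ/2) tan (nπ/L)`, the rotation `R_y(θ_n)` depends, up to a scalar
`h n`, only affinely on `e^{2πi n/L}`. -/
theorem exists_Ry_eq {lam : ℝ} {L : ℕ} (hL : Odd L) :
    ∃ h : ℕ → ℂ, ∀ n, Ry (qpdTheta lam L n) =
      h n • (Complex.exp (2 * π * Complex.I / L) ^ n •
        !![1, Complex.I * Real.sin (lam / 2); -Complex.I * Real.sin (lam / 2), 1] +
        !![1, -Complex.I * Real.sin (lam / 2); Complex.I * Real.sin (lam / 2), 1]) := by
  have hL0 : (L : ℝ) ≠ 0 := by exact_mod_cast hL.pos.ne'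
  refine ⟨fun n => Real.cos (qpdTheta lam L n / 2) / Real.cos (n * π / L) *
    (Complex.exp (-(n * π / L : ℝ) * Complex.I) / 2), fun n => ?_⟩
  beta_reduce
  -- `cos (nπ/L)` vanishes only if `2n` is an odd multiple of `L`, impossible for odd `L`
  have hcos : Real.cos (n * π / L) ≠ 0 := by
    rw [Ne, Real.cos_eq_zero_iff]
    rintro ⟨k, hk⟩
    field_simp at hk
    have hk' : (n : ℤ) * 2 = L * (2 * k + 1) := by exact_mod_cast hk
    obtain ⟨m, rfl⟩ := hL
    push_cast at hk'
    have : (2 * (m : ℤ) + 1) * (2 * k + 1) = 2 * (2 * m * k + m + k) + 1 := by ring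
    omega
  have hsin : Real.sin (qpdTheta lam L n / 2) =
      Real.cos (qpdTheta lam L n / 2) / Real.cos (n * π / L) *
        (Real.sin (lam / 2) * Real.sin (n * π / L)) := by
    have h1 : qpdTheta lam L n / 2 =
        Real.arctan (Real.sin (lam / 2) * Real.tan (n * π / L)) := by
      rw [qpdTheta]; ring
    have h2 : Real.cos (qpdTheta lam L n / 2) ≠ 0 := by
      rw [h1]; exact (Real.cos_arctan_pos _).ne'
    have h3 := Real.tan_arctan (Real.sin (lam / 2) * Real.tan (n * π / L))
    rw [← h1, Real.tan_eq_sin_div_cos, Real.tan_eq_sin_div_cos] at h3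
    field_simp at h3 ⊢
    linarith
  have hexp : Complex.exp (2 * π * Complex.I / L) ^ n =
      Complex.exp ((n * π / L : ℝ) * Complex.I) * Complex.exp ((n * π / L : ℝ) * Complex.I) := by
    rw [← Complex.exp_nat_mul, ← Complex.exp_add]
    congr 1
    push_cast
    ring
  have hinv : Complex.exp (-(n * π / L : ℝ) * Complex.I) *
      Complex.exp ((n * π / L : ℝ) * Complex.I) = 1 := by
    rw [← Complex.exp_add]; simp
  have hE : Complex.exp ((n * π / L : ℝ) * Complex.I) =
      Real.cos (n * π / L) + Real.sin (n * π / L) * Complex.I := by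
    rw [Complex.exp_mul_I, Complex.ofReal_cos, Complex.ofReal_sin]
  have hE' : Complex.exp (-(n * π / L : ℝ) * Complex.I) =
      Real.cos (n * π / L) - Real.sin (n * π / L) * Complex.I := by
    rw [Complex.exp_mul_I, Complex.cos_neg, Complex.sin_neg, Complex.ofReal_cos,
      Complex.ofReal_sin]
    ring
  have hcosC : ((Real.cos (n * π / L) : ℝ) : ℂ) ≠ 0 := by exact_mod_cast hcos
  set E := Complex.exp ((n * π / L : ℝ) * Complex.I) with hEdef
  set E' := Complex.exp (-(n * π / L : ℝ) * Complex.I) with hEdef'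
  have hc2 : E + E' = 2 * Real.cos (n * π / L) := by rw [hE, hE']; ring
  have hs2 : E - E' = 2 * Real.sin (n * π / L) * Complex.I := by rw [hE, hE']; ring
  rw [hexp]
  rw [Ry, hsin]
  push_cast only [Complex.ofReal_mul, Complex.ofReal_div]
  clear_value E E'
  generalize ((Real.cos (n * π / L) : ℝ) : ℂ) = c at *
  generalize ((Real.sin (n * π / L) : ℝ) : ℂ) = s at *
  generalize ((Real.sin (lam / 2) : ℝ) : ℂ) = l at *
  generalize ((Real.cos (qpdTheta lam L n / 2) : ℝ) : ℂ) = g at *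
  have hdiag : g = g / c * (E' / 2) * (E * E + 1) := by
    have : E' * (E * E + 1) = 2 * c := by linear_combination E * hinv + hc2
    field_simp
    linear_combination (-g) * this
  have hoff : g / c * (l * s) = g / c * (E' / 2) * (-Complex.I * l * (E * E - 1)) := by
    have : E' * (E * E - 1) = 2 * s * Complex.I := by linear_combination E * hinv + hs2
    field_simp
    linear_combination (Complex.I * g * l) * this + (2 * g * l * s) * Complex.I_sq
  ext i j
  fin_cases i <;> fin_cases j <;> simp
  · exact hdiag
  · linear_combination (-1 : ℂ) * hoff
  · linear_combination hoff
  · exact hdiag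

/-- The trace as a function of the eigenphase `φ` is, up to a phase and a constant `H` independent
of `φ`, the Chebyshev polynomial `T_L` at `cos (φ/2) / cos (λ/2)`. -/
theorem trace_qpdCore {lam : ℝ} (hlam : lam ∈ Set.Ioo 0 π) {L : ℕ} (hL : Odd L) :
    ∃ H : ℂ, ∀ φ : ℝ, (qpdCore (Complex.exp (φ * Complex.I)) lam L).trace =
      H * Complex.exp ((φ / 2 : ℝ) * Complex.I) ^ L *
        ((Polynomial.Chebyshev.T ℝ L).eval (Real.cos (φ / 2) / Real.cos (lam / 2)) : ℝ) := by
  obtain ⟨h, hh⟩ := exists_Ry_eq (lam := lam) hL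
  have hκ : Real.cos (lam / 2) ≠ 0 :=
    (Real.cos_pos_of_mem_Ioo ⟨by linarith [hlam.1, hlam.2], by linarith [hlam.2]⟩).ne'
  have hκC : ((Real.cos (lam / 2) : ℝ) : ℂ) ≠ 0 := by exact_mod_cast hκ
  have hr := Complex.isPrimitiveRoot_exp L hL.pos.ne'
  refine ⟨(∏ k ∈ Finset.range L, h k) * (4 * Real.cos (lam / 2) ^ L), fun φ => ?_⟩
  set e := Complex.exp ((φ / 2 : ℝ) * Complex.I) with he
  have hμ : Complex.exp (φ * Complex.I) = e ^ 2 := by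
    rw [he, ← Complex.exp_nat_mul]
    congr 1
    push_cast
    ring
  have htr : 1 + e ^ 2 = 2 * e * Real.cos (φ / 2) := by
    have h1 : e * Complex.exp (-(φ / 2 : ℝ) * Complex.I) = 1 := by
      rw [he, ← Complex.exp_add]; simp
    have h2 : (2 : ℂ) * Real.cos (φ / 2) = e + Complex.exp (-(φ / 2 : ℝ) * Complex.I) := by
      rw [he, Complex.ofReal_cos, Complex.two_cos]
    linear_combination (-e) * h2 - h1
  have hsc : (Real.sin (lam / 2) : ℂ) ^ 2 + (Real.cos (lam / 2) : ℂ) ^ 2 = 1 := by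
    exact_mod_cast Real.sin_sq_add_cos_sq (lam / 2)
  rw [qpdCore, seqProd_congr (g := fun k => h k • (Complex.exp (2 * π * Complex.I / L) ^ k •
      (phaseMat (e ^ 2) *
        !![1, Complex.I * Real.sin (lam / 2); -Complex.I * Real.sin (lam / 2), 1]) +
      (phaseMat (e ^ 2) *
        !![1, -Complex.I * Real.sin (lam / 2); Complex.I * Real.sin (lam / 2), 1])))
    (fun k _ => by rw [hh, hμ, mul_smul_comm, mul_add, mul_smul_comm]), seqProd_smul,
    Matrix.trace_smul, trace_seqProd _ _ hL hr,
    trace_pow_eq_chebyshev _ (e * Real.cos (lam / 2)) (Real.cos (φ / 2) / Real.cos (lam / 2)),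
    trace_pow_eq_chebyshev _ (e * Real.cos (lam / 2)) (Real.cos (φ / 2) / Real.cos (lam / 2)),
    smul_eq_mul]
  · ring
  · rw [Complex.ofReal_div, show 2 * (e * (Real.cos (lam / 2) : ℂ)) *
      (Real.cos (φ / 2) / Real.cos (lam / 2)) = 2 * e * Real.cos (φ / 2) by field_simp, ← htr]
    simp [phaseMat, Matrix.trace_fin_two]
  · rw [Matrix.det_mul, phaseMat, Matrix.det_fin_two_of, Matrix.det_fin_two_of]
    linear_combination (-e ^ 2) * hsc + (e ^ 2 * (Real.sin (lam / 2) : ℂ) ^ 2) * Complex.I_sq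
  · rw [Complex.ofReal_div, show 2 * (e * (Real.cos (lam / 2) : ℂ)) *
      (Real.cos (φ / 2) / Real.cos (lam / 2)) = 2 * e * Real.cos (φ / 2) by field_simp, ← htr]
    simp [phaseMat, Matrix.trace_fin_two]
  · rw [Matrix.det_mul, phaseMat, Matrix.det_fin_two_of, Matrix.det_fin_two_of]
    linear_combination (-e ^ 2) * hsc + (e ^ 2 * (Real.sin (lam / 2) : ℂ) ^ 2) * Complex.I_sq

/-- The `(0, 0)` entry of the conjugate is
`(M₀₀ + M₁₁) / 2` plus a multiple of `M₀₁ - M₁₀`, which vanishes for symmetric `M`. -/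
theorem Rx_conj_apply (M : Matrix (Fin 2) (Fin 2) ℂ) (hM : Mᵀ = M) :
    (Rx (-(π / 2)) * M * Rx (π / 2)) 0 0 = M.trace / 2 := by
  have h01 : M 0 1 = M 1 0 := congrFun (congrFun hM 1) 0
  have hhalf : (Real.cos (π / 2 / 2) : ℂ) * Real.cos (π / 2 / 2) = 1 / 2 := by
    rw [show π / 2 / 2 = π / 4 by ring, Real.cos_pi_div_four]
    norm_cast
    rw [div_mul_div_comm, Real.mul_self_sqrt (by norm_num)]
    norm_num
  have hs : Real.sin (π / 2 / 2) = Real.cos (π / 2 / 2) := by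
    rw [show π / 2 / 2 = π / 4 by ring, Real.cos_pi_div_four, Real.sin_pi_div_four]
  simp only [Rx, Matrix.mul_apply, Fin.sum_univ_two, Matrix.of_apply, Matrix.cons_val',
    Matrix.cons_val_zero, Matrix.cons_val_one, Matrix.cons_val_fin_one, neg_div, Real.sin_neg,
    Real.cos_neg, hs, h01, Matrix.trace_fin_two, Complex.ofReal_neg]
  linear_combination (M 0 0 + M 1 1) * hhalf -
    (M 1 1 * Real.cos (π / 2 / 2) * Real.cos (π / 2 / 2)) * Complex.I_sq

/-- On an eigenvector with eigenphase in the range `[λ, π]` in absolute value, the amplitude with which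
the qubit stays in `e₀` is `|T_L(cos (φ/2) / cos (λ/2))| / T_L(1 / cos (λ/2))`, at most `δ / 2`. -/
theorem norm_qpdQubit_le {lam δ : ℝ} (hlam : lam ∈ Set.Ioo 0 π) (hδ : δ ∈ Set.Ioo (0 : ℝ) 1)
    {L : ℕ} (hLodd : Odd L) (hL : (L : ℝ) ≥ Real.log (4 / δ) / (lam / 2))
    {φ : ℝ} (h1 : lam ≤ |φ|) (h2 : |φ| ≤ π) :
    ‖qpdQubit (Complex.exp (φ * Complex.I)) lam L 0 0‖ ≤ δ / 2 := by
  obtain ⟨H, hH⟩ := trace_qpdCore hlam hLodd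
  have hκ : 0 < Real.cos (lam / 2) :=
    Real.cos_pos_of_mem_Ioo ⟨by linarith [hlam.1, hlam.2], by linarith [hlam.2]⟩
  have hunit : ∀ φ : ℝ, ‖Complex.exp ((φ / 2 : ℝ) * Complex.I)‖ = 1 :=
    fun φ => Complex.norm_exp_ofReal_mul_I _
  have hbig := two_div_le_chebyshev hlam hδ hL
  have hδ0 := hδ.1
  -- at `φ = 0` the product of rotations is the identity, which fixes `H`
  have hH0 : ‖H‖ * (2 / δ) ≤ 2 := by
    have h0 := congrArg (‖·‖) (hH 0)
    simp only [norm_mul, norm_pow, hunit, one_pow, mul_one, Complex.norm_real] at h0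
    rw [Complex.ofReal_zero, zero_mul, Complex.exp_zero, qpdCore_one _ _ hLodd.pos,
      Matrix.trace_one, zero_div, Real.cos_zero] at h0
    simp only [Fintype.card_fin, Nat.cast_ofNat, RCLike.norm_ofNat] at h0
    exact (mul_le_mul_of_nonneg_left (hbig.trans (le_abs_self _)) (norm_nonneg _)).trans h0.ge
  have hx : |Real.cos (φ / 2) / Real.cos (lam / 2)| ≤ 1 := by
    rw [← Real.cos_abs (φ / 2), abs_div φ, abs_two, abs_of_nonneg, div_le_one hκ]
    · exact Real.cos_le_cos_of_nonneg_of_le_pi (by linarith [hlam.1]) (by linarith [Real.pi_pos])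
        (by linarith)
    · exact div_nonneg (Real.cos_nonneg_of_mem_Icc
        ⟨by linarith [abs_nonneg φ, Real.pi_pos], by linarith⟩) hκ.le
  have hT := Polynomial.Chebyshev.abs_eval_T_real_le_one L hx
  rw [qpdQubit, Rx_conj_apply _ (qpdCore_transpose _ _ _ hLodd.pos), hH]
  simp only [norm_div, norm_mul, norm_pow, hunit, one_pow, mul_one, Complex.norm_real,
    RCLike.norm_ofNat]
  have hH1 : ‖H‖ ≤ δ := by
    have : ‖H‖ * (2 / δ) = 2 * (‖H‖ / δ) := by ring
    rw [this] at hH0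
    exact (div_le_one hδ0).1 (by linarith)
  have := mul_le_mul hH1 hT (abs_nonneg _) hδ0.le
  rw [Real.norm_eq_abs]
  linarith

/-! ### The reflection on an eigenvector -/

theorem phaseMat_mem {μ : ℂ} (hμ : ‖μ‖ = 1) : (phaseMat μ)ᴴ * phaseMat μ = 1 := by
  have h : (starRingEnd ℂ) μ * μ = 1 := by rw [Complex.conj_mul', hμ]; simp
  ext i j
  fin_cases i <;> fin_cases j <;> simp [phaseMat, Matrix.mul_apply, Fin.sum_univ_two, h]

theorem Ry_conjTranspose_mul (θ : ℝ) : (Ry θ)ᴴ * Ry θ = 1 := by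
  have h : (Ry θ)ᴴ = Ry (-θ) := by
    rw [Ry_neg]
    ext i j
    fin_cases i <;> fin_cases j <;>
      simp [Ry, ← Complex.ofReal_cos, ← Complex.ofReal_sin, -Complex.ofReal_cos, -Complex.ofReal_sin]
  rw [h, Ry_mul, neg_add_cancel, Ry_zero]

theorem Rx_mul_Rx_neg (θ : ℝ) : Rx (-θ) * Rx θ = 1 := by
  have h := Complex.sin_sq_add_cos_sq (θ / 2 : ℂ)
  ext i j
  fin_cases i <;> fin_cases j <;>
    simp [Rx, Matrix.mul_apply, Fin.sum_univ_two, neg_div]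
  · linear_combination h - Complex.sin (θ / 2) ^ 2 * Complex.I_sq
  · ring
  · ring
  · linear_combination h - Complex.sin (θ / 2) ^ 2 * Complex.I_sq

theorem Rx_conjTranspose_mul (θ : ℝ) : (Rx θ)ᴴ * Rx θ = 1 := by
  have h : (Rx θ)ᴴ = Rx (-θ) := by
    ext i j
    fin_cases i <;> fin_cases j <;>
      simp [Rx, neg_div, ← Complex.ofReal_cos, ← Complex.ofReal_sin, -Complex.ofReal_cos,
        -Complex.ofReal_sin]
  rw [h, Rx_mul_Rx_neg]

theorem conjTranspose_mul_mul {A B : Matrix (Fin 2) (Fin 2) ℂ} (hA : Aᴴ * A = 1)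
    (hB : Bᴴ * B = 1) : (A * B)ᴴ * (A * B) = 1 := by
  rw [Matrix.conjTranspose_mul, mul_assoc, ← mul_assoc Aᴴ, hA, one_mul, hB]

theorem qpdQubit_conjTranspose_mul {μ : ℂ} (hμ : ‖μ‖ = 1) (lam : ℝ) (L : ℕ) :
    (qpdQubit μ lam L)ᴴ * qpdQubit μ lam L = 1 := by
  refine conjTranspose_mul_mul (conjTranspose_mul_mul (Rx_conjTranspose_mul _) ?_)
    (Rx_conjTranspose_mul _)
  have : ∀ n, (seqProd (fun k => phaseMat μ * Ry (qpdTheta lam L k)) n)ᴴ *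
      seqProd (fun k => phaseMat μ * Ry (qpdTheta lam L k)) n = 1 := by
    intro n
    induction n with
    | zero => simp [seqProd]
    | succ n ih =>
      exact conjTranspose_mul_mul
        (conjTranspose_mul_mul (phaseMat_mem hμ) (Ry_conjTranspose_mul _)) ih
  exact this L

theorem Rz_pi : Rz π = (-Complex.I) • !![1, 0; 0, -1] := by
  have h1 : Complex.exp (-(π / 2 : ℝ) * Complex.I) = -Complex.I := by
    rw [Complex.exp_mul_I, Complex.cos_neg, Complex.sin_neg, ← Complex.ofReal_cos,
      ← Complex.ofReal_sin, Real.cos_pi_div_two, Real.sin_pi_div_two]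
    simp
  have h2 : Complex.exp ((π / 2 : ℝ) * Complex.I) = Complex.I := by
    rw [Complex.exp_mul_I, ← Complex.ofReal_cos,
      ← Complex.ofReal_sin, Real.cos_pi_div_two, Real.sin_pi_div_two]
    simp
  rw [Rz, h1, h2]
  ext i j
  fin_cases i <;> fin_cases j <;> simp

theorem Rz_neg_pi : Rz (-π) = Complex.I • !![1, 0; 0, -1] := by
  have h1 : Complex.exp (-(-π / 2 : ℝ) * Complex.I) = Complex.I := by
    rw [Complex.exp_mul_I, Complex.cos_neg, Complex.sin_neg, ← Complex.ofReal_cos,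
      ← Complex.ofReal_sin, neg_div, Real.cos_neg, Real.sin_neg, Real.cos_pi_div_two,
      Real.sin_pi_div_two]
    simp
  have h2 : Complex.exp ((-π / 2 : ℝ) * Complex.I) = -Complex.I := by
    rw [Complex.exp_mul_I, ← Complex.ofReal_cos, ← Complex.ofReal_sin, neg_div, Real.cos_neg,
      Real.sin_neg, Real.cos_pi_div_two, Real.sin_pi_div_two]
    simp
  rw [Rz, h1, h2]
  ext i j
  fin_cases i <;> fin_cases j <;> simp

/-- The operator `R` restricted to an eigenvector of `U` on which the circuit acts as `W`. -/
noncomputable def reflQubit (W : Matrix (Fin 2) (Fin 2) ℂ) : Matrix (Fin 2) (Fin 2) ℂ :=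
  Rz (-π) * Wᴴ * Rz π * W

theorem reflQubit_eq (W : Matrix (Fin 2) (Fin 2) ℂ) :
    reflQubit W = !![1, 0; 0, -1] * Wᴴ * !![1, 0; 0, -1] * W := by
  rw [reflQubit, Rz_pi, Rz_neg_pi]
  simp only [Matrix.smul_mul, Matrix.mul_smul, smul_smul, neg_mul, Complex.I_mul_I, neg_neg,
    one_smul]

theorem reflQubit_one : reflQubit 1 = 1 := by
  rw [reflQubit_eq]
  ext i j
  fin_cases i <;> fin_cases j <;> simp

/-- The first column of `Z Wᴴ Z W + 1` with `Z = diag(1, -1)`, for unitary `W`, is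
`(2 |W₀₀|², -2 conj(W₀₁) W₀₀)`, and the first row of `W` has norm `1`. -/
theorem reflQubit_norm {W : Matrix (Fin 2) (Fin 2) ℂ} (hW : Wᴴ * W = 1) :
    ‖reflQubit W 0 0 + 1‖ ^ 2 + ‖reflQubit W 1 0‖ ^ 2 = 4 * ‖W 0 0‖ ^ 2 := by
  have hW' : W * Wᴴ = 1 := mul_eq_one_comm.1 hW
  have e00 := congrFun (congrFun hW 0) 0
  have e10 := congrFun (congrFun hW 1) 0
  have f00 := congrFun (congrFun hW' 0) 0
  simp only [Matrix.mul_apply, Fin.sum_univ_two, Matrix.conjTranspose_apply, Matrix.one_apply_eq,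
    ne_eq, one_ne_zero, not_false_eq_true, Matrix.one_apply_ne] at e00 e10 f00
  have r00 : reflQubit W 0 0 + 1 = 2 * (star (W 0 0) * W 0 0) := by
    rw [reflQubit_eq]
    simp only [Matrix.mul_apply, Fin.sum_univ_two, Matrix.of_apply, Matrix.cons_val',
      Matrix.cons_val_zero, Matrix.cons_val_one, Matrix.cons_val_fin_one,
      Matrix.conjTranspose_apply]
    linear_combination -e00
  have r10 : reflQubit W 1 0 = -2 * (star (W 0 1) * W 0 0) := by
    rw [reflQubit_eq]
    simp only [Matrix.mul_apply, Fin.sum_univ_two, Matrix.of_apply, Matrix.cons_val',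
      Matrix.cons_val_zero, Matrix.cons_val_one, Matrix.cons_val_fin_one,
      Matrix.conjTranspose_apply]
    linear_combination e10
  have hn : ‖W 0 0‖ ^ 2 + ‖W 0 1‖ ^ 2 = 1 := by
    have h : ((‖W 0 0‖ ^ 2 + ‖W 0 1‖ ^ 2 : ℝ) : ℂ) = 1 := by
      push_cast
      rw [← f00, ← Complex.mul_conj', ← Complex.mul_conj']
      rfl
    exact_mod_cast h
  rw [r00, r10]
  simp only [norm_mul, norm_neg, norm_star, RCLike.norm_ofNat]
  linear_combination 4 * ‖W 0 0‖ ^ 2 * hn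

/-! ### Actions on product vectors -/

/-- The product vector `x ⊗ v`, in the block encoding of `ℂ² ⊗ ℂᴺ` used by `tensorId`. -/
def embVec {N : ℕ} (v : Fin N → ℂ) (x : Fin 2 → ℂ) : Fin N ⊕ Fin N → ℂ :=
  Sum.elim (x 0 • v) (x 1 • v)

/-- `A` maps `x ⊗ v` to `(w x) ⊗ v`, and `Aᴴ` maps it to `(wᴴ x) ⊗ v`. The condition on the adjoint
is what makes this relation stable under both products and adjoints. -/
structure ActsOn {N : ℕ} (A : Matrix (Fin N ⊕ Fin N) (Fin N ⊕ Fin N) ℂ)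
    (w : Matrix (Fin 2) (Fin 2) ℂ) (v : Fin N → ℂ) : Prop where
  mulVec : ∀ x, A.mulVec (embVec v x) = embVec v (w.mulVec x)
  conj : ∀ x, Aᴴ.mulVec (embVec v x) = embVec v (wᴴ.mulVec x)

theorem ActsOn.mul {N : ℕ} {A B : Matrix (Fin N ⊕ Fin N) (Fin N ⊕ Fin N) ℂ}
    {w z : Matrix (Fin 2) (Fin 2) ℂ} {v : Fin N → ℂ} (hA : ActsOn A w v) (hB : ActsOn B z v) :
    ActsOn (A * B) (w * z) v :=
  ⟨fun x => by rw [← Matrix.mulVec_mulVec, hB.mulVec, hA.mulVec, Matrix.mulVec_mulVec],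
   fun x => by
    rw [Matrix.conjTranspose_mul, ← Matrix.mulVec_mulVec, hA.conj, hB.conj, Matrix.mulVec_mulVec,
      Matrix.conjTranspose_mul]⟩

theorem ActsOn.conjTranspose {N : ℕ} {A : Matrix (Fin N ⊕ Fin N) (Fin N ⊕ Fin N) ℂ}
    {w : Matrix (Fin 2) (Fin 2) ℂ} {v : Fin N → ℂ} (hA : ActsOn A w v) : ActsOn Aᴴ wᴴ v :=
  ⟨hA.conj, fun x => by simpa using hA.mulVec x⟩

theorem tensorId_mulVec {N : ℕ} (w : Matrix (Fin 2) (Fin 2) ℂ) (v : Fin N → ℂ) (x : Fin 2 → ℂ) :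
    (tensorId w).mulVec (embVec v x) = embVec v (w.mulVec x) := by
  rw [tensorId, embVec, Matrix.fromBlocks_mulVec, embVec]
  simp only [Sum.elim_comp_inl, Sum.elim_comp_inr, Matrix.smul_mulVec, Matrix.one_mulVec, smul_smul,
    ← add_smul, Matrix.mulVec, dotProduct, Fin.sum_univ_two]

theorem actsOn_tensorId {N : ℕ} (w : Matrix (Fin 2) (Fin 2) ℂ) (v : Fin N → ℂ) :
    ActsOn (tensorId w) w v := by
  refine ⟨tensorId_mulVec w v, fun x => ?_⟩
  have : (tensorId w : Matrix (Fin N ⊕ Fin N) (Fin N ⊕ Fin N) ℂ)ᴴ = tensorId wᴴ := by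
    simp [tensorId, Matrix.fromBlocks_conjTranspose]
  rw [this, tensorId_mulVec]

theorem ctrl_mulVec {N : ℕ} {U : Matrix (Fin N) (Fin N) ℂ} {μ : ℂ} {v : Fin N → ℂ}
    (h : U.mulVec v = μ • v) (x : Fin 2 → ℂ) :
    (ctrl U).mulVec (embVec v x) = embVec v ((phaseMat μ).mulVec x) := by
  rw [ctrl, embVec, Matrix.fromBlocks_mulVec, embVec]
  simp only [Sum.elim_comp_inl, Sum.elim_comp_inr, Matrix.mulVec_smul, h, Matrix.one_mulVec,
    Matrix.zero_mulVec, add_zero, zero_add]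
  simp [phaseMat, Matrix.mulVec, dotProduct, Fin.sum_univ_two, smul_smul, mul_comm]

theorem actsOn_ctrl {N : ℕ} {U : Matrix (Fin N) (Fin N) ℂ} (hU : U ∈ Matrix.unitaryGroup (Fin N) ℂ)
    {μ : ℂ} (hμ : ‖μ‖ = 1) {v : Fin N → ℂ} (h : U.mulVec v = μ • v) :
    ActsOn (ctrl U) (phaseMat μ) v := by
  refine ⟨ctrl_mulVec h, fun x => ?_⟩
  have h1 : (ctrl U)ᴴ = ctrl Uᴴ := by
    simp [ctrl, Matrix.fromBlocks_conjTranspose]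
  have h2 : (phaseMat μ)ᴴ = phaseMat ((starRingEnd ℂ) μ) := by
    ext i j
    fin_cases i <;> fin_cases j <;> simp [phaseMat]
  have hμ1 : (starRingEnd ℂ) μ * μ = 1 := by rw [Complex.conj_mul', hμ]; simp
  have h3 : Uᴴ.mulVec v = (starRingEnd ℂ) μ • v := by
    have h4 : Uᴴ.mulVec (U.mulVec v) = v := by
      rw [Matrix.mulVec_mulVec, ← Matrix.star_eq_conjTranspose,
        Matrix.mem_unitaryGroup_iff'.1 hU, Matrix.one_mulVec]
    rw [h, Matrix.mulVec_smul] at h4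
    calc Uᴴ.mulVec v = ((starRingEnd ℂ) μ * μ) • Uᴴ.mulVec v := by rw [hμ1, one_smul]
      _ = _ := by rw [mul_smul, h4]
  rw [h1, h2, ctrl_mulVec h3]

theorem actsOn_one {N : ℕ} (v : Fin N → ℂ) :
    ActsOn (1 : Matrix (Fin N ⊕ Fin N) (Fin N ⊕ Fin N) ℂ) 1 v :=
  ⟨fun x => by simp, fun x => by simp⟩

theorem actsOn_qpdCircuit {N : ℕ} {U : Matrix (Fin N) (Fin N) ℂ}
    (hU : U ∈ Matrix.unitaryGroup (Fin N) ℂ) {μ : ℂ} (hμ : ‖μ‖ = 1) {v : Fin N → ℂ}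
    (h : U.mulVec v = μ • v) (lam : ℝ) (L : ℕ) :
    ActsOn (qpdCircuit U lam L) (qpdQubit μ lam L) v := by
  rw [qpdCircuit, list_prod_eq_seqProd]
  refine ((actsOn_tensorId _ v).mul ?_).mul (actsOn_tensorId _ v)
  have : ∀ n, ActsOn (seqProd (fun k => ctrl U * tensorId (Ry (qpdTheta lam L k))) n)
      (seqProd (fun k => phaseMat μ * Ry (qpdTheta lam L k)) n) v := by
    intro n
    induction n with
    | zero => exact actsOn_one v
    | succ n ih => exact ((actsOn_ctrl hU hμ h).mul (actsOn_tensorId _ v)).mul ih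
  exact this L

/-- Parseval's identity, in coordinates. -/
theorem sum_norm_sq_basis {N : ℕ} {ι : Type*} [Fintype ι]
    (b : OrthonormalBasis ι ℂ (EuclideanSpace ℂ (Fin N))) (a : ι → ℂ) :
    ∑ i, ‖(∑ j, a j • (b j).ofLp) i‖ ^ 2 = ∑ j, ‖a j‖ ^ 2 := by
  have h1 : ∑ j, a j • (b j).ofLp = (b.repr.symm (WithLp.toLp 2 a)).ofLp := by
    rw [← b.sum_repr_symm]
    simp
  rw [h1, ← EuclideanSpace.norm_sq_eq, LinearIsometryEquiv.norm_map, EuclideanSpace.norm_sq_eq]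

/-! ### The approximate reflection -/

/-- Approximate reflection about the marked eigenstate (Lemma on approximate
reflection).  Let U be a unitary N×N matrix whose 1-eigenspace is spanned by
the unit vector p, and all of whose other eigenvalues have the form `e^{iφ}`
with `λ ≤ |φ| ≤ π`.  For δ ∈ (0,1) and odd `L ≥ ln(4/δ)/(λ/2)`, the operator
`R = (R_z(−π)⊗I)·C(U,λ,L)†·(R_z(π)⊗I)·C(U,λ,L)` fixes `e₀ ⊗ p`, and satisfies
`‖(R + I)(e₀ ⊗ ψ)‖ ≤ δ` for any unit vector ψ orthogonal to p. -/
theorem approximate_reflection (N : ℕ) (U : Matrix (Fin N) (Fin N) ℂ)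
    (hU : U ∈ Matrix.unitaryGroup (Fin N) ℂ)
    (p : Fin N → ℂ) (hpunit : ∑ i, ‖p i‖ ^ 2 = 1) (hUp : U.mulVec p = p)
    (hspan : ∀ v : Fin N → ℂ, U.mulVec v = v → ∃ c : ℂ, v = c • p)
    (lam : ℝ) (hlam : lam ∈ Set.Ioo 0 π)
    (hspec : ∀ (μ : ℂ) (v : Fin N → ℂ), v ≠ 0 → U.mulVec v = μ • v →
      μ = 1 ∨ ∃ φ : ℝ, lam ≤ |φ| ∧ |φ| ≤ π ∧ μ = Complex.exp ((φ : ℝ) * Complex.I))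
    (δ : ℝ) (hδ : δ ∈ Set.Ioo 0 1)
    (L : ℕ) (hLpos : 0 < L) (hLodd : Odd L)
    (hL : (L : ℝ) ≥ Real.log (4 / δ) / (lam / 2))
    (R : Matrix (Fin N ⊕ Fin N) (Fin N ⊕ Fin N) ℂ)
    (hR : R = tensorId (Rz (-π)) * (qpdCircuit U lam L)ᴴ * tensorId (Rz π) *
      qpdCircuit U lam L) :
    R.mulVec (Sum.elim p 0) = Sum.elim p 0 ∧
      ∀ ψ : Fin N → ℂ, (∑ i, (starRingEnd ℂ) (ψ i) * p i) = 0 → (∑ i, ‖ψ i‖ ^ 2 = 1) →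
        Real.sqrt (∑ i, ‖(R + 1).mulVec (Sum.elim ψ 0) i‖ ^ 2) ≤ δ := by
  -- `R` acts on `ℂ² ⊗ v`, for each eigenvector `v` of `U`, as a `2 × 2` matrix on the qubit
  have hact : ∀ (μ : ℂ) (v : Fin N → ℂ), ‖μ‖ = 1 → U.mulVec v = μ • v →
      ActsOn R (reflQubit (qpdQubit μ lam L)) v := by
    intro μ v hμ h
    have hC := actsOn_qpdCircuit hU hμ h lam L
    rw [hR]
    exact (((actsOn_tensorId _ v).mul hC.conjTranspose).mul (actsOn_tensorId _ v)).mul hC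
  have hemb : ∀ v : Fin N → ℂ, embVec v ![1, 0] = Sum.elim v 0 := fun v => by simp [embVec]
  refine ⟨?_, fun ψ hψp hψ => ?_⟩
  · have h := (hact 1 p (by simp) (by simpa using hUp)).mulVec ![1, 0]
    rwa [qpdQubit, qpdCore_one _ _ hLpos, mul_one, Rx_mul_Rx_neg, reflQubit_one,
      Matrix.one_mulVec, hemb] at h
  -- an orthonormal eigenbasis of `U`
  obtain ⟨b, μ, hb⟩ := exists_eigenbasis (Matrix.toEuclideanLin U) (fun x y => by
    simp only [EuclideanSpace.inner_eq_star_dotProduct, Matrix.ofLp_toLpLin,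
      Matrix.toLin'_apply]
    rw [Matrix.star_mulVec, dotProduct_comm, ← Matrix.dotProduct_mulVec, Matrix.mulVec_mulVec,
      ← Matrix.star_eq_conjTranspose, Matrix.mem_unitaryGroup_iff'.1 hU, Matrix.one_mulVec,
      dotProduct_comm])
  have hv : ∀ j, U.mulVec (b j).ofLp = μ j • (b j).ofLp := fun j => by
    simpa using congrArg WithLp.ofLp (hb j)
  have hv0 : ∀ j, (b j).ofLp ≠ 0 := fun j h =>
    b.toBasis.ne_zero j (by simpa using (WithLp.ofLp_eq_zero 2).1 h)
  have hμ : ∀ j, ‖μ j‖ = 1 := fun j => by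
    rcases hspec _ _ (hv0 j) (hv j) with h | ⟨φ, -, -, h⟩
    · simp [h]
    · rw [h, Complex.norm_exp_ofReal_mul_I]
  -- the coordinates of `ψ` in the eigenbasis
  set c : _ → ℂ := fun j => b.repr (WithLp.toLp 2 ψ) j with hc
  have hψc : ψ = ∑ j, c j • (b j).ofLp := by
    simpa using (congrArg WithLp.ofLp (b.sum_repr (WithLp.toLp 2 ψ))).symm
  have hcsum : ∑ j, ‖c j‖ ^ 2 = 1 := by
    rw [← sum_norm_sq_basis b c, ← hψc, hψ]
  set r := fun j => reflQubit (qpdQubit (μ j) lam L) with hr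
  have hRψ : (R + 1).mulVec (Sum.elim ψ 0) =
      Sum.elim (∑ j, (c j * (r j 0 0 + 1)) • (b j).ofLp) (∑ j, (c j * r j 1 0) • (b j).ofLp) := by
    have h1 : (Sum.elim ψ 0 : Fin N ⊕ Fin N → ℂ) = ∑ j, c j • embVec (b j).ofLp ![1, 0] := by
      conv_lhs => rw [hψc]
      ext (i | i) <;> simp [embVec]
    rw [h1, Matrix.mulVec_sum]
    simp only [Matrix.mulVec_smul, Matrix.add_mulVec, Matrix.one_mulVec,
      (hact _ _ (hμ _) (hv _)).mulVec]
    ext (i | i) <;> simp [embVec, Matrix.mulVec, dotProduct, hr] <;>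
      refine Finset.sum_congr rfl fun j _ => ?_ <;> ring
  have hbound : ∀ j, ‖c j‖ ^ 2 * (4 * ‖qpdQubit (μ j) lam L 0 0‖ ^ 2) ≤ ‖c j‖ ^ 2 * δ ^ 2 := by
    intro j
    rcases hspec _ _ (hv0 j) (hv j) with h | ⟨φ, h1, h2, h⟩
    · -- an eigenvector for the eigenvalue `1` is a multiple of `p`, hence orthogonal to `ψ`
      obtain ⟨a, ha⟩ := hspan (b j).ofLp (by rw [hv, h, one_smul])
      have hcj : c j = 0 := by
        have h3 : ∑ i, ψ i * (starRingEnd ℂ) (p i) = 0 := by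
          simpa using congrArg (starRingEnd ℂ) hψp
        rw [hc]
        beta_reduce
        rw [b.repr_apply_apply, EuclideanSpace.inner_eq_star_dotProduct, ha, star_smul,
          dotProduct_smul]
        simp only [dotProduct, Pi.star_apply]
        exact (congrArg _ h3).trans (smul_zero _)
      simp [hcj]
    · have h4 := norm_qpdQubit_le hlam hδ hLodd hL h1 h2
      rw [← h] at h4
      have h5 := pow_le_pow_left₀ (norm_nonneg _) h4 2
      exact mul_le_mul_of_nonneg_left (by linarith) (sq_nonneg _)
  refine Real.sqrt_le_iff.2 ⟨hδ.1.le, ?_⟩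
  rw [hRψ, Fintype.sum_sum_type]
  simp only [Sum.elim_inl, Sum.elim_inr]
  rw [sum_norm_sq_basis, sum_norm_sq_basis, ← Finset.sum_add_distrib]
  calc ∑ j, (‖c j * (r j 0 0 + 1)‖ ^ 2 + ‖c j * r j 1 0‖ ^ 2)
      = ∑ j, ‖c j‖ ^ 2 * (4 * ‖qpdQubit (μ j) lam L 0 0‖ ^ 2) := by
        refine Finset.sum_congr rfl fun j _ => ?_
        rw [norm_mul, norm_mul, mul_pow, mul_pow, ← mul_add,
          reflQubit_norm (qpdQubit_conjTranspose_mul (hμ j) lam L)]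
    _ ≤ ∑ j, ‖c j‖ ^ 2 * δ ^ 2 := Finset.sum_le_sum fun j _ => hbound j
    _ = δ ^ 2 := by rw [← Finset.sum_mul, hcsum, one_mul]
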